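/- Fix α > 0. There exists a constant C > 0 (depending only on α) such that for all integers M ≥ 1 and k ≥ 0, for independent random variables S and X where S has the Gamma distribution with shape M and scale α and X has the Gamma distribution with shape k and scale 1 (X ≡ 0 when k = 0), and for every real β: | P(S − X ≥ β) − Q( (β − α·M + k)/√(α²·M + k) ) | ≤ C/√(M + k). -/

import Mathlib

open MeasureTheory ProbabilityTheory

/-- The standard Gaussian tail function `Q(x) = (1/√(2π)) ∫ₓ^∞ e^{−t²/2} dt`. -/
noncomputable def gaussQ (x : ℝ) : ℝ :=
  (Real.sqrt (2 * Real.pi))⁻¹ * ∫ t in Set.Ioi x, Real.exp (-t ^ 2 / 2)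

open Filter Topology

lemma be_integrableOn_pow_exp (n : ℕ) {r : ℝ} (hr : 0 < r) :
    IntegrableOn (fun s : ℝ => s ^ n * Real.exp (-(r * s))) (Set.Ioi 0) := by
  have h := integrableOn_rpow_mul_exp_neg_mul_rpow (p := 1) (s := n) (b := r)
    (by have : (0:ℝ) ≤ n := Nat.cast_nonneg n
        linarith) one_pos hr
  refine h.congr_fun (fun s hs => ?_) measurableSet_Ioi
  simp

lemma be_gammaPDF_toReal (n : ℕ) {r : ℝ} (hr : 0 < r) (s : ℝ) :
    (gammaPDF ((n + 1 : ℕ) : ℝ) r s).toReal =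
      (Set.Ici (0:ℝ)).indicator
        (fun s => r ^ (n+1) / Real.Gamma ((n + 1 : ℕ) : ℝ) * (s ^ n * Real.exp (-(r * s)))) s := by
  have hpos : (0:ℝ) < ((n + 1 : ℕ) : ℝ) := by positivity
  rw [gammaPDF, ENNReal.toReal_ofReal (gammaPDFReal_nonneg hpos hr s), gammaPDFReal]
  by_cases h : 0 ≤ s
  · rw [if_pos h, Set.indicator_of_mem (by exact h)]
    have : ((n + 1 : ℕ) : ℝ) - 1 = (n : ℝ) := by push_cast; ring
    rw [this, Real.rpow_natCast, Real.rpow_natCast]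
    ring
  · rw [if_neg h, Set.indicator_of_notMem (by exact h)]

lemma be_measurable_gammaPDF (a r : ℝ) : Measurable (gammaPDF a r) :=
  (measurable_gammaPDFReal a r).ennreal_ofReal

lemma be_integral_gamma (n : ℕ) {r : ℝ} (hr : 0 < r) (h : ℝ → ℝ) :
    ∫ s, h s ∂(gammaMeasure ((n + 1 : ℕ) : ℝ) r) =
      r ^ (n+1) / Real.Gamma ((n + 1 : ℕ) : ℝ) *
        ∫ s in Set.Ioi 0, s ^ n * Real.exp (-(r * s)) * h s := by
  rw [gammaMeasure, integral_withDensity_eq_integral_toReal_smul (be_measurable_gammaPDF _ _)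
    (Eventually.of_forall (fun s => by simp [gammaPDF]))]
  simp_rw [be_gammaPDF_toReal n hr]
  rw [← integral_const_mul, ← integral_Ici_eq_integral_Ioi,
    ← integral_indicator measurableSet_Ici]
  congr 1
  ext s
  by_cases hs : s ∈ Set.Ici (0:ℝ)
  · simp only [Set.indicator_of_mem hs, smul_eq_mul]; ring
  · simp only [Set.indicator_of_notMem hs, smul_eq_mul]; ring

lemma be_integrable_gamma (n : ℕ) {r : ℝ} (hr : 0 < r) (h : ℝ → ℝ) :
    Integrable h (gammaMeasure ((n + 1 : ℕ) : ℝ) r) ↔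
      IntegrableOn (fun s => s ^ n * Real.exp (-(r * s)) * h s) (Set.Ioi 0) := by
  rw [gammaMeasure, integrable_withDensity_iff_integrable_smul' (be_measurable_gammaPDF _ _)
    (Eventually.of_forall (fun s => by simp [gammaPDF]))]
  simp_rw [be_gammaPDF_toReal n hr]
  have hK : r ^ (n+1) / Real.Gamma ((n + 1 : ℕ) : ℝ) ≠ 0 := by
    have : 0 < Real.Gamma ((n + 1 : ℕ) : ℝ) := Real.Gamma_pos_of_pos (by positivity)
    positivity
  rw [← integrableOn_Ici_iff_integrableOn_Ioi, ← integrable_indicator_iff measurableSet_Ici]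
  refine Iff.trans ?_ (integrable_const_mul_iff (IsUnit.mk0 _ hK) _)
  refine iff_of_eq (congrArg (fun f => Integrable f volume) ?_)
  ext s
  by_cases hs : s ∈ Set.Ici (0:ℝ)
  · simp only [Set.indicator_of_mem hs, smul_eq_mul]; ring
  · simp only [Set.indicator_of_notMem hs, smul_eq_mul]; ring

/-- Stein-type property of a law with mean `m` and scale `θ`. -/
structure BEStein (ν : Measure ℝ) (m θ : ℝ) : Prop where
  prob : IsProbabilityMeasure ν
  sq : Integrable (fun s : ℝ => s ^ 2) ν
  stein : ∀ (g g' : ℝ → ℝ) (A B p : ℝ), Continuous g → Measurable g' →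
    (∀ s, s ≠ p → HasDerivAt g (g' s) s) → (∀ s, |g s| ≤ A + A * |s|) → (∀ s, |g' s| ≤ B) →
    ∫ s, (s - m) * g s ∂ν = θ * ∫ s, s * g' s ∂ν

lemma be_stein_dirac : BEStein (Measure.dirac 0) 0 1 := by
  refine ⟨inferInstance, integrable_dirac (by simp), ?_⟩
  intro g g' A B p _ _ _ _ _
  simp

lemma be_FTC (F F' : ℝ → ℝ) (p : ℝ) (hF : Continuous F) (hF' : ∀ s, s ≠ p → HasDerivAt F (F' s) s)
    (hi : IntegrableOn F' (Set.Ioi 0)) (h0 : F 0 = 0) (ht : Tendsto F atTop (𝓝 0)) :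
    ∫ s in Set.Ioi 0, F' s = 0 := by
  have h1 := intervalIntegral_tendsto_integral_Ioi 0 hi tendsto_id
  refine tendsto_nhds_unique h1 (ht.congr' ?_)
  filter_upwards [eventually_ge_atTop 0] with b hb
  rw [id, integral_eq_of_hasDerivAt_off_countable_of_le F F' hb (Set.countable_singleton p)
    hF.continuousOn (fun x hx => hF' x hx.2), h0, sub_zero]
  rw [intervalIntegrable_iff_integrableOn_Ioc_of_le hb]
  exact hi.mono_set Set.Ioc_subset_Ioi_self

lemma be_tendsto_pow_exp (n : ℕ) {r : ℝ} (hr : 0 < r) :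
    Tendsto (fun s : ℝ => s ^ n * Real.exp (-(r * s))) atTop (𝓝 0) := by
  have h := (Real.tendsto_pow_mul_exp_neg_atTop_nhds_zero n).comp
    (tendsto_id.const_mul_atTop hr)
  have h2 := h.const_mul ((r ^ n)⁻¹)
  rw [mul_zero] at h2
  refine h2.congr (fun s => ?_)
  have : r ^ n ≠ 0 := by positivity
  simp only [Function.comp, id, mul_pow]
  field_simp

lemma be_stein_gamma (n : ℕ) {r : ℝ} (hr : 0 < r) :
    BEStein (gammaMeasure ((n + 1 : ℕ) : ℝ) r) (((n + 1 : ℕ) : ℝ) / r) (1 / r) := by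
  have hP := isProbabilityMeasure_gammaMeasure (a := ((n + 1 : ℕ) : ℝ)) (by positivity) hr
  set ν := gammaMeasure ((n + 1 : ℕ) : ℝ) r with hν
  have hsq : Integrable (fun s : ℝ => s ^ 2) ν := by
    rw [hν, be_integrable_gamma n hr]
    refine (be_integrableOn_pow_exp (n+2) hr).congr_fun (fun s _ => ?_) measurableSet_Ioi
    ring
  have h1 : Integrable (fun s : ℝ => |s|) ν := by
    refine Integrable.mono' ((integrable_const (1:ℝ)).add hsq) (by fun_prop)
      (Eventually.of_forall fun s => ?_)
    simp only [Real.norm_eq_abs, abs_abs, Pi.add_apply]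
    nlinarith [sq_nonneg (|s| - 1), sq_abs s]
  refine ⟨hP, hsq, ?_⟩
  intro g g' A B p hg hg' hd hA hB
  have hA0 : 0 ≤ A := by have := (abs_nonneg _).trans (hA 0); simpa using this
  have i1 : Integrable (fun s => (s - ((n + 1 : ℕ) : ℝ) / r) * g s) ν := by
    set m := ((n + 1 : ℕ) : ℝ) / r
    refine Integrable.mono' (((integrable_const (|m| * A)).add (h1.const_mul (A + |m| * A))).add
      (hsq.const_mul A)) (by fun_prop) (Eventually.of_forall fun s => ?_)
    simp only [Real.norm_eq_abs, abs_mul, Pi.add_apply]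
    have a1 : |s - m| ≤ |s| + |m| := abs_sub s m
    calc |s - m| * |g s| ≤ (|s| + |m|) * (A + A * |s|) :=
          mul_le_mul a1 (hA s) (abs_nonneg _) (by positivity)
      _ = |m| * A + (A + |m| * A) * |s| + A * |s| ^ 2 := by ring
      _ ≤ _ := by rw [sq_abs]
  have i2 : Integrable (fun s => s * g' s) ν := by
    refine Integrable.mono' (h1.const_mul B) (by fun_prop) (Eventually.of_forall fun s => ?_)
    simp only [Real.norm_eq_abs, abs_mul]
    rw [mul_comm B]
    exact mul_le_mul_of_nonneg_left (hB s) (abs_nonneg _)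
  rw [← integral_const_mul, ← sub_eq_zero, ← integral_sub i1 (i2.const_mul _), hν,
    be_integral_gamma n hr]
  have i3 := (be_integrable_gamma n hr _).1 (i1.sub (i2.const_mul (1/r)))
  have hz := be_FTC (fun s => s ^ (n+1) * Real.exp (-(r * s)) * g s * (-(1/r)))
    (fun s => s ^ n * Real.exp (-(r * s)) *
      ((s - ((n + 1 : ℕ) : ℝ) / r) * g s - 1 / r * (s * g' s))) p (by fun_prop) ?_ ?_ (by simp) ?_
  · rw [hz, mul_zero]
  · intro s hs
    have e1 : HasDerivAt (fun s => Real.exp (-(r * s))) (Real.exp (-(r * s)) * (-(r * 1))) s :=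
      ((hasDerivAt_id s).const_mul r).neg.exp
    have := ((((hasDerivAt_pow (n+1) s).mul e1).mul (hd s hs)).mul_const (-(1/r)))
    refine this.congr_deriv ?_
    simp only [Pi.mul_apply]
    have hr' : r ≠ 0 := hr.ne'
    simp only [Nat.add_sub_cancel]
    field_simp
    ring
  · exact i3
  · have t1 := (((be_tendsto_pow_exp (n+1) hr).add (be_tendsto_pow_exp (n+2) hr)).const_mul (A/r))
    simp only [add_zero, mul_zero] at t1
    refine squeeze_zero_norm' ?_ t1
    filter_upwards [eventually_ge_atTop 0] with s hs
    have hh := hA s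
    rw [abs_of_nonneg hs] at hh
    rw [Real.norm_eq_abs, abs_mul, abs_mul, abs_of_nonneg (a := s ^ (n+1) * _) (by positivity),
      abs_neg, abs_of_pos (a := 1 / r) (by positivity)]
    calc s ^ (n+1) * Real.exp (-(r * s)) * |g s| * (1/r)
        ≤ s ^ (n+1) * Real.exp (-(r * s)) * (A + A * s) * (1/r) := by gcongr
      _ = _ := by ring

/-- Unnormalised Gaussian tail. -/
noncomputable def beG (x : ℝ) : ℝ := ∫ t in Set.Ioi x, Real.exp (-t ^ 2 / 2)

lemma be_gauss_integrable : Integrable (fun t : ℝ => Real.exp (-t ^ 2 / 2)) := by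
  refine (integrable_exp_neg_mul_sq (b := 1/2) (by norm_num)).congr
    (Eventually.of_forall fun t => ?_)
  simp only
  congr 1
  ring

lemma be_gauss_integral : ∫ t : ℝ, Real.exp (-t ^ 2 / 2) = Real.sqrt (2 * Real.pi) := by
  have := integral_gaussian (1/2)
  rw [show Real.pi / (1/2) = 2 * Real.pi by ring] at this
  rw [← this]
  congr 1
  ext t
  congr 1
  ring

lemma beG_neg (x : ℝ) : beG (-x) = Real.sqrt (2 * Real.pi) - beG x := by
  have h1 := integral_comp_neg_Ioi (-x) (fun t : ℝ => Real.exp (-t ^ 2 / 2))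
  simp only [neg_sq, neg_neg] at h1
  have h2 := integral_add_compl (measurableSet_Iic (a := x)) be_gauss_integrable
  rw [Set.compl_Iic, be_gauss_integral] at h2
  rw [beG, h1, beG]
  linarith

lemma beG_nonneg (x : ℝ) : 0 ≤ beG x :=
  setIntegral_nonneg measurableSet_Ioi fun t _ => (Real.exp_pos _).le

lemma beG_le (x : ℝ) : beG x ≤ Real.sqrt (2 * Real.pi) := by
  have := beG_nonneg (-x)
  rw [beG_neg] at this
  linarith

lemma beG_anti : Antitone beG := by
  intro x y hxy
  exact setIntegral_mono_set be_gauss_integrable.integrableOn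
    (Eventually.of_forall fun t => (Real.exp_pos _).le)
    (Set.Ioi_subset_Ioi hxy).eventuallyLE

lemma beG_deriv (x : ℝ) : HasDerivAt beG (-Real.exp (-x ^ 2 / 2)) x := by
  have hc : Continuous (fun t : ℝ => Real.exp (-t ^ 2 / 2)) := by fun_prop
  have h : beG = fun y => beG 0 - ∫ t in (0:ℝ)..y, Real.exp (-t ^ 2 / 2) := by
    ext y
    have := intervalIntegral.integral_interval_add_Ioi (a := 0) (b := y)
      be_gauss_integrable.integrableOn be_gauss_integrable.integrableOn
    rw [beG, beG]
    linarith
  rw [h]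
  exact (intervalIntegral.integral_hasDerivAt_right (hc.intervalIntegrable _ _)
    (hc.stronglyMeasurableAtFilter _ _) hc.continuousAt).const_sub _

lemma beG_continuous : Continuous beG :=
  continuous_iff_continuousAt.2 fun x => (beG_deriv x).continuousAt

lemma beG_mills {w : ℝ} (hw : 0 ≤ w) : w * (Real.exp (w ^ 2 / 2) * beG w) ≤ 1 := by
  have hd : ∀ x ∈ Set.Ici w, HasDerivAt (fun t : ℝ => -Real.exp (-t ^ 2 / 2))
      (x * Real.exp (-x ^ 2 / 2)) x := by
    intro x _
    have := (((hasDerivAt_pow 2 x).neg.div_const 2).exp).neg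
    refine this.congr_deriv ?_
    simp only [Pi.neg_apply]
    norm_num
    ring
  have ht : Tendsto (fun t : ℝ => -Real.exp (-t ^ 2 / 2)) atTop (𝓝 0) := by
    rw [← neg_zero]
    refine Tendsto.neg (Real.tendsto_exp_atBot.comp ?_)
    have : Tendsto (fun t : ℝ => t ^ 2 / 2) atTop atTop :=
      (tendsto_pow_atTop two_ne_zero).atTop_div_const (by norm_num)
    refine (tendsto_neg_atTop_atBot.comp this).congr fun t => ?_
    simp only [Function.comp]
    ring
  have hi : IntegrableOn (fun x : ℝ => x * Real.exp (-x ^ 2 / 2)) (Set.Ioi w) :=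
    integrableOn_Ioi_deriv_of_nonneg' hd
      (fun x hx => mul_nonneg (hw.trans (le_of_lt hx)) (Real.exp_pos _).le) ht
  have h1 := integral_Ioi_of_hasDerivAt_of_tendsto' hd hi ht
  have h2 : w * beG w ≤ Real.exp (-w ^ 2 / 2) := by
    rw [beG, ← integral_const_mul]
    calc ∫ t in Set.Ioi w, w * Real.exp (-t ^ 2 / 2)
        ≤ ∫ t in Set.Ioi w, t * Real.exp (-t ^ 2 / 2) := by
          refine setIntegral_mono_on (be_gauss_integrable.integrableOn.const_mul _) hi
            measurableSet_Ioi fun t ht => ?_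
          exact mul_le_mul_of_nonneg_right (le_of_lt ht) (Real.exp_pos _).le
      _ = _ := by rw [h1]; ring
  calc w * (Real.exp (w ^ 2 / 2) * beG w) = Real.exp (w ^ 2 / 2) * (w * beG w) := by ring
    _ ≤ Real.exp (w ^ 2 / 2) * Real.exp (-w ^ 2 / 2) := by gcongr
    _ = 1 := by
      rw [← Real.exp_add, show w ^ 2 / 2 + -w ^ 2 / 2 = 0 by ring, Real.exp_zero]

/-- The Stein solution. -/
noncomputable def beF (x w : ℝ) : ℝ :=
  -(Real.exp (w ^ 2 / 2) * (beG (max x w) - gaussQ x * beG w))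

/-- Its derivative. -/
noncomputable def beF' (x w : ℝ) : ℝ :=
  w * beF x w + ((Set.Ici x).indicator (fun _ => (1:ℝ)) w - gaussQ x)

lemma gaussQ_eq (x : ℝ) : gaussQ x * Real.sqrt (2 * Real.pi) = beG x := by
  have : Real.sqrt (2 * Real.pi) ≠ 0 := by positivity
  rw [gaussQ, beG]
  field_simp

lemma gaussQ_nonneg (x : ℝ) : 0 ≤ gaussQ x :=
  mul_nonneg (by positivity) (beG_nonneg x)

lemma gaussQ_le (x : ℝ) : gaussQ x ≤ 1 := by
  have h : 0 < Real.sqrt (2 * Real.pi) := by positivity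
  have h1 := beG_le x
  rw [← gaussQ_eq] at h1
  nlinarith

lemma beF_continuous (x : ℝ) : Continuous (beF x) := by
  unfold beF
  have := beG_continuous
  fun_prop

lemma beF'_measurable (x : ℝ) : Measurable (beF' x) := by
  unfold beF'
  have := (beF_continuous x).measurable
  have h2 : Measurable ((Set.Ici x).indicator (fun _ => (1:ℝ))) :=
    measurable_const.indicator measurableSet_Ici
  fun_prop

lemma beF_deriv (x w : ℝ) (h : w ≠ x) : HasDerivAt (beF x) (beF' x w) w := by
  have he : HasDerivAt (fun w : ℝ => Real.exp (w ^ 2 / 2)) (Real.exp (w ^ 2 / 2) * w) w := by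
    refine (((hasDerivAt_pow 2 w).div_const 2).exp).congr_deriv ?_
    norm_num
  have hee : Real.exp (w ^ 2 / 2) * Real.exp (-w ^ 2 / 2) = 1 := by
    rw [← Real.exp_add, show w ^ 2 / 2 + -w ^ 2 / 2 = 0 by ring, Real.exp_zero]
  rcases lt_or_gt_of_ne h with h | h
  · have hm : HasDerivAt (fun w => beG (max x w)) 0 w := by
      refine (hasDerivAt_const w (beG x)).congr_of_eventuallyEq ?_
      filter_upwards [eventually_lt_nhds h] with y hy
      rw [max_eq_left hy.le]
    have := (he.mul (hm.sub ((beG_deriv w).const_mul (gaussQ x)))).neg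
    refine this.congr_deriv ?_
    rw [beF', beF, Set.indicator_of_notMem (by simpa using h)]
    simp only [Pi.sub_apply]
    linear_combination (-gaussQ x) * hee
  · have hm : HasDerivAt (fun w => beG (max x w)) (-Real.exp (-w ^ 2 / 2)) w := by
      refine (beG_deriv w).congr_of_eventuallyEq ?_
      filter_upwards [eventually_gt_nhds h] with y hy
      rw [max_eq_right hy.le]
    have := (he.mul (hm.sub ((beG_deriv w).const_mul (gaussQ x)))).neg
    refine this.congr_deriv ?_
    rw [beF', beF, Set.indicator_of_mem (by simpa using h.le)]
    simp only [Pi.sub_apply]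
    linear_combination (1-gaussQ x) * hee

lemma beF_bounds (x w : ℝ) : |beF x w| ≤ Real.exp (w ^ 2 / 2) * beG w ∧
    |beF x w| ≤ Real.exp (w ^ 2 / 2) * beG (-w) := by
  have q0 := gaussQ_nonneg x
  have q1 := gaussQ_le x
  have g0 := beG_nonneg w
  have gx := gaussQ_eq x
  have gc := beG_le w
  have gn := beG_neg w
  have hH : 0 ≤ beG (max x w) - gaussQ x * beG w := by
    rcases le_total x w with h | h
    · rw [max_eq_right h]; nlinarith
    · rw [max_eq_left h, ← gx]; nlinarith
  rw [beF, abs_neg, abs_of_nonneg (by positivity)]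
  constructor
  · refine mul_le_mul_of_nonneg_left ?_ (Real.exp_pos _).le
    have := beG_anti (le_max_right x w)
    nlinarith
  · refine mul_le_mul_of_nonneg_left ?_ (Real.exp_pos _).le
    rw [gn]
    rcases le_total x w with h | h
    · rw [max_eq_right h]
      have hq : beG w ≤ beG x := beG_anti h
      rw [← gx] at hq
      nlinarith [gaussQ_eq w, gaussQ_le w, gaussQ_nonneg w]
    · rw [max_eq_left h, ← gx]; nlinarith

lemma beF_mul_bound (x w : ℝ) : |w * beF x w| ≤ 1 := by
  obtain ⟨h1, h2⟩ := beF_bounds x w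
  rw [abs_mul]
  rcases le_total 0 w with h | h
  · rw [abs_of_nonneg h]
    exact (mul_le_mul_of_nonneg_left h1 h).trans (beG_mills h)
  · rw [abs_of_nonpos h]
    have hn : 0 ≤ -w := by linarith
    have := beG_mills hn
    rw [neg_sq] at this
    exact (mul_le_mul_of_nonneg_left h2 hn).trans this

lemma beF'_bound (x w : ℝ) : |beF' x w| ≤ 2 := by
  have h := beF_mul_bound x w
  have q0 := gaussQ_nonneg x
  have q1 := gaussQ_le x
  have h2 : |(Set.Ici x).indicator (fun _ => (1:ℝ)) w - gaussQ x| ≤ 1 := by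
    by_cases hw : w ∈ Set.Ici x
    · rw [Set.indicator_of_mem hw, abs_le]; constructor <;> linarith
    · rw [Set.indicator_of_notMem hw, abs_le]; constructor <;> linarith
  rw [beF']
  exact (abs_add_le _ _).trans (by linarith)

lemma beF_bound : ∃ A : ℝ, 0 ≤ A ∧ ∀ x w, |beF x w| ≤ A := by
  refine ⟨1 + Real.exp (1/2) * Real.sqrt (2 * Real.pi), by positivity, fun x w => ?_⟩
  rcases le_total 1 |w| with h | h
  · have h1 := beF_mul_bound x w
    rw [abs_mul] at h1
    have : 0 ≤ Real.exp (1/2) * Real.sqrt (2 * Real.pi) := by positivity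
    nlinarith [abs_nonneg (beF x w)]
  · have h1 := (beF_bounds x w).1
    have h2 : Real.exp (w ^ 2 / 2) ≤ Real.exp (1/2) := by
      apply Real.exp_le_exp.2
      have : w ^ 2 ≤ 1 := by rw [← sq_abs]; nlinarith [abs_nonneg w]
      linarith
    have := mul_le_mul h2 (beG_le w) (beG_nonneg w) (Real.exp_pos _).le
    linarith

lemma BEStein.int_id {ν : Measure ℝ} {m θ : ℝ} (h : BEStein ν m θ) :
    Integrable (fun s : ℝ => s) ν := by
  have := h.prob
  refine Integrable.mono' ((integrable_const (1:ℝ)).add h.sq) (by fun_prop)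
    (Eventually.of_forall fun s => ?_)
  simp only [Real.norm_eq_abs, Pi.add_apply]
  nlinarith [sq_nonneg (|s| - 1), sq_abs s]

lemma BEStein.mean {ν : Measure ℝ} {m θ : ℝ} (h : BEStein ν m θ) : ∫ s, s ∂ν = m := by
  have := h.prob
  have h1 := h.stein (fun _ => 1) (fun _ => 0) 1 0 0 continuous_const measurable_const
    (fun s _ => hasDerivAt_const s 1) (fun s => by simp) (fun s => by simp)
  simp only [mul_one, mul_zero, integral_zero] at h1
  rw [integral_sub h.int_id (integrable_const _)] at h1
  simp at h1
  linarith

lemma BEStein.var {ν : Measure ℝ} {m θ : ℝ} (h : BEStein ν m θ) :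
    ∫ s, (s - m) ^ 2 ∂ν = θ * m := by
  have h1 := h.stein (fun s => s - m) (fun _ => 1) (1 + |m|) 1 0 (by fun_prop) measurable_const
    (fun s _ => (hasDerivAt_id s).sub_const m)
    (fun s => (abs_sub s m).trans
      (by nlinarith [abs_nonneg s, abs_nonneg m, mul_nonneg (abs_nonneg m) (abs_nonneg s)]))
    (fun s => by simp)
  simp only [mul_one, h.mean] at h1
  rw [← h1]
  congr 1
  ext s
  ring

lemma BEStein.abs_dev {ν : Measure ℝ} {m θ : ℝ} (h : BEStein ν m θ) :
    ∫ s, |s - m| ∂ν ≤ Real.sqrt (θ * m) := by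
  have := h.prob
  have i1 : Integrable (fun s => |s - m|) ν := (h.int_id.sub (integrable_const m)).abs
  have i2 : Integrable (fun s => (s - m) ^ 2) ν := by
    refine ((h.sq.sub (h.int_id.const_mul (2 * m))).add (integrable_const (m^2))).congr
      (Eventually.of_forall fun s => ?_)
    simp only [Pi.add_apply, Pi.sub_apply]
    ring
  set e := ∫ s, |s - m| ∂ν with he
  have h0 : 0 ≤ ∫ s, (|s - m| - e) ^ 2 ∂ν := integral_nonneg fun s => sq_nonneg _
  have h2 : ∫ s, (|s - m| - e) ^ 2 ∂ν = θ * m - 2 * e * e + e ^ 2 := by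
    have : ∀ s, (|s - m| - e) ^ 2 = ((s - m) ^ 2 - (2 * e) * |s - m|) + e ^ 2 := by
      intro s; rw [sub_sq, sq_abs]; ring
    simp_rw [this]
    have i3 : Integrable (fun s => (s - m) ^ 2 - (2 * e) * |s - m|) ν := i2.sub (i1.const_mul _)
    rw [integral_add i3 (integrable_const _),
      integral_sub i2 (i1.const_mul _), h.var, integral_const_mul, ← he]
    simp
  apply Real.le_sqrt_of_sq_le
  rw [h2] at h0
  linarith

lemma be_prod {ν₁ ν₂ : Measure ℝ} {m₁ θ₁ m₂ θ₂ σ : ℝ} (h₁ : BEStein ν₁ m₁ θ₁)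
    (h₂ : BEStein ν₂ m₂ θ₂) (hθ₁ : 0 ≤ θ₁) (hθ₂ : 0 ≤ θ₂) (hσ : 0 < σ)
    (hσ2 : σ ^ 2 = θ₁ * m₁ + θ₂ * m₂) (β : ℝ) :
    |((ν₁.prod ν₂) {p | β ≤ p.1 - p.2}).toReal - gaussQ ((β - (m₁ - m₂)) / σ)| ≤
      2 * (θ₁ * Real.sqrt (θ₁ * m₁) + θ₂ * Real.sqrt (θ₂ * m₂)) / σ ^ 2 := by
  have := h₁.prob
  have := h₂.prob
  obtain ⟨A, hA0, hA⟩ := beF_bound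
  set x := (β - (m₁ - m₂)) / σ with hx
  set μ := ν₁.prod ν₂ with hμ
  set W : ℝ × ℝ → ℝ := fun p => (p.1 - p.2 - (m₁ - m₂)) / σ with hW
  have hWm : Measurable W := by fun_prop
  have fm : Measurable (fun p => beF x (W p)) := (beF_continuous x).measurable.comp hWm
  have fm' : Measurable (fun p => beF' x (W p)) := (beF'_measurable x).comp hWm
  have is : Integrable (fun p : ℝ × ℝ => p.1) μ := h₁.int_id.comp_fst ν₂
  have ix : Integrable (fun p : ℝ × ℝ => p.2) μ := h₂.int_id.comp_snd ν₁
  have i1 : Integrable (fun p : ℝ × ℝ => (p.1 - m₁) * beF x (W p)) μ :=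
    (is.sub (integrable_const m₁)).mul_bdd fm.aestronglyMeasurable
      (Eventually.of_forall fun p => hA x _)
  have i2 : Integrable (fun p : ℝ × ℝ => (p.2 - m₂) * beF x (W p)) μ :=
    (ix.sub (integrable_const m₂)).mul_bdd fm.aestronglyMeasurable
      (Eventually.of_forall fun p => hA x _)
  have i3 : Integrable (fun p : ℝ × ℝ => p.1 * beF' x (W p)) μ :=
    is.mul_bdd fm'.aestronglyMeasurable (Eventually.of_forall fun p => beF'_bound x _)
  have i4 : Integrable (fun p : ℝ × ℝ => p.2 * beF' x (W p)) μ :=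
    ix.mul_bdd fm'.aestronglyMeasurable (Eventually.of_forall fun p => beF'_bound x _)
  have i5 : Integrable (fun p : ℝ × ℝ => beF' x (W p)) μ :=
    (integrable_const (2:ℝ)).mono' fm'.aestronglyMeasurable
      (Eventually.of_forall fun p => beF'_bound x _)
  have hgrow : ∀ (y s : ℝ), |beF x y| ≤ A + A * |s| := fun y s =>
    (hA x y).trans (by nlinarith [mul_nonneg hA0 (abs_nonneg s)])
  have hσinv : |σ⁻¹| = σ⁻¹ := abs_of_pos (by positivity)
  have e1 : ∫ p, (p.1 - m₁) * beF x (W p) ∂μ = θ₁ * (σ⁻¹ * ∫ p, p.1 * beF' x (W p) ∂μ) := by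
    rw [hμ, integral_prod_symm _ i1, integral_prod_symm _ i3, ← integral_const_mul,
      ← integral_const_mul]
    congr 1
    ext y
    have hWd : ∀ s, HasDerivAt (fun s => W (s, y)) σ⁻¹ s := by
      intro s
      have := (((hasDerivAt_id s).sub_const y).sub_const (m₁ - m₂)).div_const σ
      exact this.congr_deriv (by rw [one_div])
    have := h₁.stein (fun s => beF x (W (s, y))) (fun s => beF' x (W (s, y)) * σ⁻¹) A (2 * σ⁻¹)
      (β + y) ((beF_continuous x).comp (by fun_prop))
      ((fm'.comp (by fun_prop : Measurable (fun s : ℝ => (s, y)))).mul_const _) ?_ (fun s => hgrow _ s) ?_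
    · rw [this, ← integral_const_mul σ⁻¹]
      congr 2
      ext s
      ring
    · intro s hs
      refine HasDerivAt.comp (h₂ := beF x) s (beF_deriv x _ ?_) (hWd s)
      intro h
      apply hs
      rw [hx, hW] at h
      simp only at h
      have h' := (div_left_inj' hσ.ne').1 h
      linarith
    · intro s
      rw [abs_mul, hσinv]
      exact mul_le_mul_of_nonneg_right (beF'_bound x _) (by positivity)
  have e2 : ∫ p, (p.2 - m₂) * beF x (W p) ∂μ = -(θ₂ * (σ⁻¹ * ∫ p, p.2 * beF' x (W p) ∂μ)) := by
    rw [hμ, integral_prod _ i2, integral_prod _ i4, ← integral_const_mul,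
      ← integral_const_mul, ← integral_neg]
    congr 1
    ext s
    have hWd : ∀ y, HasDerivAt (fun y => W (s, y)) (-σ⁻¹) y := by
      intro y
      have := (((hasDerivAt_id y).const_sub s).sub_const (m₁ - m₂)).div_const σ
      exact this.congr_deriv (by rw [neg_div, one_div])
    have := h₂.stein (fun y => beF x (W (s, y))) (fun y => beF' x (W (s, y)) * (-σ⁻¹)) A (2 * σ⁻¹)
      (s - β) ((beF_continuous x).comp (by fun_prop))
      ((fm'.comp (by fun_prop : Measurable (fun y : ℝ => (s, y)))).mul_const _) ?_ (fun y => hgrow _ y) ?_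
    · rw [this, ← integral_const_mul σ⁻¹, ← mul_neg, ← integral_neg]
      congr 2
      ext y
      ring
    · intro y hy
      refine HasDerivAt.comp (h₂ := beF x) y (beF_deriv x _ ?_) (hWd y)
      intro h
      apply hy
      rw [hx, hW] at h
      simp only at h
      have h' := (div_left_inj' hσ.ne').1 h
      linarith
    · intro y
      rw [abs_mul, abs_neg, hσinv]
      exact mul_le_mul_of_nonneg_right (beF'_bound x _) (by positivity)
  have hset : {p : ℝ × ℝ | β ≤ p.1 - p.2} = W ⁻¹' (Set.Ici x) := by
    ext p
    simp only [Set.mem_ofPred_eq, Set.mem_preimage, Set.mem_Ici, hx, hW]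
    rw [div_le_div_iff_of_pos_right hσ]
    constructor <;> intro h <;> linarith
  have hind : ∀ p, (Set.Ici x).indicator (fun _ => (1:ℝ)) (W p) - gaussQ x =
      beF' x (W p) - W p * beF x (W p) := by
    intro p; rw [beF']; ring
  have hms : MeasurableSet (W ⁻¹' (Set.Ici x)) := hWm measurableSet_Ici
  have hL : ((ν₁.prod ν₂) {p | β ≤ p.1 - p.2}).toReal - gaussQ x =
      ∫ p, (beF' x (W p) - W p * beF x (W p)) ∂μ := by
    simp_rw [← hind]
    have : ∀ p, (Set.Ici x).indicator (fun _ => (1:ℝ)) (W p) =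
      (W ⁻¹' (Set.Ici x)).indicator (fun _ => (1:ℝ)) p := fun p => rfl
    simp_rw [this]
    rw [integral_sub ((integrable_const _).indicator hms) (integrable_const _),
      integral_indicator hms, hset]
    simp [Measure.real, hμ]
  have hWf : ∀ p, W p * beF x (W p) =
      σ⁻¹ * ((p.1 - m₁) * beF x (W p) - (p.2 - m₂) * beF x (W p)) := by
    intro p
    have : W p = σ⁻¹ * ((p.1 - m₁) - (p.2 - m₂)) := by
      simp only [hW]; rw [div_eq_inv_mul]; ring
    rw [← sub_mul, ← mul_assoc, ← this]
  have hR : ∫ p, (beF' x (W p) - W p * beF x (W p)) ∂μ =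
      ∫ p, -(σ ^ 2)⁻¹ * ((θ₁ * (p.1 - m₁) + θ₂ * (p.2 - m₂)) * beF' x (W p)) ∂μ := by
    have l : ∫ p, (beF' x (W p) - W p * beF x (W p)) ∂μ = ∫ p, beF' x (W p) ∂μ -
        σ⁻¹ * (θ₁ * (σ⁻¹ * ∫ p, p.1 * beF' x (W p) ∂μ) +
          (θ₂ * (σ⁻¹ * ∫ p, p.2 * beF' x (W p) ∂μ))) := by
      simp_rw [hWf]
      have i6 : Integrable (fun p : ℝ × ℝ => σ⁻¹ * ((p.1 - m₁) * beF x (W p) -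
          (p.2 - m₂) * beF x (W p))) μ := (i1.sub i2).const_mul _
      rw [integral_sub i5 i6, integral_const_mul, integral_sub i1 i2, e1, e2]
      ring
    have r : ∀ p : ℝ × ℝ, -(σ ^ 2)⁻¹ * ((θ₁ * (p.1 - m₁) + θ₂ * (p.2 - m₂)) * beF' x (W p)) =
        beF' x (W p) - (σ ^ 2)⁻¹ * (θ₁ * (p.1 * beF' x (W p)) + θ₂ * (p.2 * beF' x (W p))) := by
      intro p
      have : (σ ^ 2)⁻¹ * (θ₁ * m₁ + θ₂ * m₂) = 1 := by
        rw [← hσ2]; exact inv_mul_cancel₀ (by positivity)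
      linear_combination (beF' x (W p)) * this
    simp_rw [r]
    have i7 : Integrable (fun p : ℝ × ℝ => (σ ^ 2)⁻¹ * (θ₁ * (p.1 * beF' x (W p)) +
        θ₂ * (p.2 * beF' x (W p)))) μ := ((i3.const_mul _).add (i4.const_mul _)).const_mul _
    rw [l, integral_sub i5 i7,
      integral_const_mul, integral_add (i3.const_mul _) (i4.const_mul _), integral_const_mul,
      integral_const_mul]
    rw [← inv_pow]
    ring
  rw [hL, hR]
  have j1 : Integrable (fun s => |s - m₁|) ν₁ := (h₁.int_id.sub (integrable_const m₁)).abs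
  have j2 : Integrable (fun s => |s - m₂|) ν₂ := (h₂.int_id.sub (integrable_const m₂)).abs
  have k1 : Integrable (fun p : ℝ × ℝ => |p.1 - m₁|) μ := j1.comp_fst ν₂
  have k2 : Integrable (fun p : ℝ × ℝ => |p.2 - m₂|) μ := j2.comp_snd ν₁
  have d1 : ∫ p, |p.1 - m₁| ∂μ = ∫ s, |s - m₁| ∂ν₁ := by
    rw [hμ, integral_prod _ k1]; simp
  have d2 : ∫ p, |p.2 - m₂| ∂μ = ∫ s, |s - m₂| ∂ν₂ := by
    rw [hμ, integral_prod _ k2]; simp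
  rw [← Real.norm_eq_abs]
  calc _ ≤ ∫ p, (σ ^ 2)⁻¹ * ((θ₁ * |p.1 - m₁| + θ₂ * |p.2 - m₂|) * 2) ∂μ := by
        refine norm_integral_le_of_norm_le
          ((((k1.const_mul _).add (k2.const_mul _)).mul_const _).const_mul _)
          (Eventually.of_forall fun p => ?_)
        rw [Real.norm_eq_abs, abs_mul, abs_neg, abs_of_pos (a := (σ ^ 2)⁻¹) (by positivity), abs_mul]
        refine mul_le_mul_of_nonneg_left ?_ (by positivity)
        refine mul_le_mul ?_ (beF'_bound x _) (abs_nonneg _) (by positivity)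
        refine (abs_add_le _ _).trans ?_
        rw [abs_mul, abs_mul, abs_of_nonneg hθ₁, abs_of_nonneg hθ₂]
    _ = (σ ^ 2)⁻¹ * ((θ₁ * ∫ s, |s - m₁| ∂ν₁) + θ₂ * ∫ s, |s - m₂| ∂ν₂) * 2 := by
        rw [integral_const_mul, integral_mul_const,
          integral_add (k1.const_mul _) (k2.const_mul _), integral_const_mul,
          integral_const_mul, d1, d2]
        ring
    _ ≤ (σ ^ 2)⁻¹ * ((θ₁ * Real.sqrt (θ₁ * m₁)) + θ₂ * Real.sqrt (θ₂ * m₂)) * 2 := by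
        have := h₁.abs_dev
        have := h₂.abs_dev
        gcongr
    _ = _ := by ring

/-- Lemma 1 (Berry–Esseen-type uniform normal approximation): for a fixed scale
`α > 0` there is a constant `C > 0` such that for all `M ≥ 1`, `k ≥ 0`,
independent `S ∼ Γ(M, scale α)` and `X ∼ Γ(k, scale 1)` (`X ≡ 0` when `k = 0`),
and every `β`, `|P(S − X ≥ β) − Q((β − αM + k)/√(α²M + k))| ≤ C/√(M + k)`. -/
theorem gamma_difference_berry_esseen
    (α : ℝ) (hα : 0 < α) :
    ∃ C : ℝ, 0 < C ∧
      ∀ (M k : ℕ), 1 ≤ M →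
        ∀ {Ω : Type} [MeasurableSpace Ω] (P : Measure Ω) [IsProbabilityMeasure P]
          (S X : Ω → ℝ), Measurable S → Measurable X →
          IndepFun S X P →
          P.map S = gammaMeasure (M : ℝ) (1 / α) →
          P.map X = (if k = 0 then Measure.dirac 0 else gammaMeasure (k : ℝ) 1) →
          ∀ β : ℝ,
            |(P {ω | β ≤ S ω - X ω}).toReal -
                gaussQ ((β - α * M + k) / Real.sqrt (α ^ 2 * M + k))|
              ≤ C / Real.sqrt (M + k) := by
  have hm0 : 0 < min (α ^ 2) 1 := lt_min (by positivity) one_pos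
  refine ⟨2 * (α ^ 2 + 1) / min (α ^ 2) 1, by positivity, ?_⟩
  intro M k hM Ω _ P _ S X hS hX hind hlS hlX β
  have hM0 : (1:ℝ) ≤ M := by exact_mod_cast hM
  have hk0 : (0:ℝ) ≤ k := Nat.cast_nonneg k
  have s1 : BEStein (P.map S) (α * M) α := by
    obtain ⟨n, rfl⟩ : ∃ n, M = n + 1 := ⟨M - 1, by omega⟩
    have := be_stein_gamma n (r := 1 / α) (by positivity)
    rw [hlS]
    convert this using 1
    · field_simp
    · field_simp
  have s2 : BEStein (P.map X) k 1 := by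
    rw [hlX]
    rcases k with _ | n
    · simpa using be_stein_dirac
    · rw [if_neg (Nat.succ_ne_zero n)]
      have := be_stein_gamma n (r := 1) one_pos
      simpa using this
  have hv : 0 < α ^ 2 * M + k := by positivity
  have hσ : 0 < Real.sqrt (α ^ 2 * M + k) := Real.sqrt_pos.2 hv
  have hσ2 : Real.sqrt (α ^ 2 * M + k) ^ 2 = α ^ 2 * M + k := Real.sq_sqrt hv.le
  have key := be_prod s1 s2 hα.le zero_le_one hσ (by rw [hσ2]; ring) β
  rw [← (indepFun_iff_map_prod_eq_prod_map_map hS.aemeasurable hX.aemeasurable).1 hind,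
    Measure.map_apply (by fun_prop) (measurableSet_le measurable_const (by fun_prop)), hσ2] at key
  have earg : β - (α * M - k) = β - α * M + k := by ring
  rw [earg] at key
  refine key.trans ?_
  have hN : (0:ℝ) < M + k := by positivity
  have hR : 0 < Real.sqrt ((M:ℝ) + k) := Real.sqrt_pos.2 hN
  have hRR : Real.sqrt ((M:ℝ) + k) * Real.sqrt ((M:ℝ) + k) = M + k := Real.mul_self_sqrt hN.le
  have b1 : Real.sqrt (α * (α * M)) ≤ α * Real.sqrt ((M:ℝ) + k) := by
    rw [show α * (α * M) = α ^ 2 * M by ring, Real.sqrt_mul (by positivity), Real.sqrt_sq hα.le]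
    exact mul_le_mul_of_nonneg_left (Real.sqrt_le_sqrt (by linarith)) hα.le
  have b2 : Real.sqrt (1 * (k:ℝ)) ≤ Real.sqrt ((M:ℝ) + k) := Real.sqrt_le_sqrt (by linarith)
  have b3 : min (α ^ 2) 1 * (M + k) ≤ α ^ 2 * M + k := by
    have := min_le_left (α ^ 2) 1
    have := min_le_right (α ^ 2) 1
    nlinarith
  have b4 : α * Real.sqrt (α * (α * M)) + 1 * Real.sqrt (1 * (k:ℝ)) ≤
      (α ^ 2 + 1) * Real.sqrt ((M:ℝ) + k) := by
    nlinarith [mul_le_mul_of_nonneg_left b1 hα.le]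
  calc _ ≤ 2 * ((α ^ 2 + 1) * Real.sqrt ((M:ℝ) + k)) / (min (α ^ 2) 1 * (M + k)) := by
        gcongr
    _ = _ := by
        generalize Real.sqrt ((M:ℝ) + k) = R at hR hRR
        rw [← hRR]
        field_simp
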